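/- For n ≥ 4, the number of universal cycles for P_{n,3} equals (n-3)^{(n-1)(n-2)/2} · (n-2)^{n-1} · (n-1)^{(n-1)(n-2)/2 − 2} · n^{n-2} · ((n-3)!)^{n(n-1)}. -/

import Mathlib

/-- `c` is a universal cycle for `k`-permutations of `[n]`, viewed as a cyclic
sequence of period `N`: every injective `k`-tuple appears exactly once as `k`
consecutive elements. -/
def IsUniversalCycle (n k N : ℕ) (c : ZMod N → Fin n) : Prop :=
  ∀ w : Fin k → Fin n, Function.Injective w →
    ∃! i : ZMod N, ∀ j : Fin k, c (i + (j : ℕ)) = w j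

/-- Two cyclic sequences are the same universal cycle iff one is a rotation of
the other. -/
def RotEquiv {n k N : ℕ} (c c' : {c : ZMod N → Fin n // IsUniversalCycle n k N c}) : Prop :=
  ∃ t : ZMod N, ∀ i, c'.1 i = c.1 (i + t)

section Euler

variable {V E : Type*} (src tgt : E → V)

/-- `IsTrail src tgt x l y` says that the list of arcs `l` is a walk from `x` to `y`. -/
def IsTrail : V → List E → V → Prop
  | x, [], y => x = y
  | x, e :: l, y => src e = x ∧ IsTrail (tgt e) l y

/-- The relation joining `a` to the target of the last arc of the list `σ a`. -/
def LastStep (σ : V → List E) (a b : V) : Prop := ∃ e, (σ a).getLast? = some e ∧ tgt e = b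

/-- `σ` orders, for every vertex `v`, the arcs leaving `v`. -/
def IsArcOrdering (σ : V → List E) : Prop :=
  ∀ v, (σ v).Nodup ∧ ∀ e, e ∈ σ v ↔ src e = v

/-- `l` is an Eulerian circuit starting and ending at `w`. -/
def IsEulerTour (w : V) (l : List E) : Prop :=
  l.Nodup ∧ (∀ e, e ∈ l) ∧ IsTrail src tgt w l w

variable {src tgt}

theorem IsTrail.count [DecidableEq V] {l : List E} {x y : V} (h : IsTrail src tgt x l y) (u : V) :
    l.countP (tgt · = u) + (if x = u then 1 else 0) =
      l.countP (src · = u) + (if y = u then 1 else 0) := by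
  induction l generalizing x with
  | nil => cases h; simp
  | cons e l ih =>
    obtain ⟨rfl, h⟩ := h
    have := ih h
    simp only [List.countP_cons, decide_eq_true_eq]
    omega

theorem IsTrail.filter_inj [DecidableEq V] {l l' : List E} {x y y' : V}
    (h : IsTrail src tgt x l y) (h' : IsTrail src tgt x l' y')
    (heq : ∀ v, l.filter (src · = v) = l'.filter (src · = v)) : l = l' := by
  induction l generalizing x l' with
  | nil =>
    cases l' with
    | nil => rfl
    | cons e l' => simpa using heq (src e)
  | cons e l ih =>
    cases l' with
    | nil => simpa using heq (src e)
    | cons e' l' =>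
      obtain ⟨rfl, h⟩ := h
      obtain ⟨h1, h'⟩ := h'
      have := heq (src e)
      simp only [List.filter_cons, h1, decide_true, if_true, List.cons.injEq] at this
      obtain ⟨rfl, -⟩ := this
      congr 1
      refine ih h h' fun v => ?_
      have := heq v
      simp only [List.filter_cons] at this
      split_ifs at this <;> simp_all

theorem IsTrail.reflTransGen_lastStep [DecidableEq V] {l : List E} {x y : V}
    (h : IsTrail src tgt x l y) (v : V) (hv : v = x ∨ ∃ e ∈ l, src e = v) :
    Relation.ReflTransGen (LastStep tgt fun v => l.filter (src · = v)) v y := by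
  induction l generalizing x v with
  | nil =>
    cases h
    obtain rfl | ⟨e, he, -⟩ := hv
    · exact .refl
    · simp at he
  | cons e l ih =>
    obtain ⟨rfl, h⟩ := h
    have mono : ∀ a b, LastStep tgt (fun v => l.filter (src · = v)) a b →
        LastStep tgt (fun v => (e :: l).filter (src · = v)) a b := by
      rintro a b ⟨f, hf, rfl⟩
      refine ⟨f, ?_, rfl⟩
      simp only [List.filter_cons]
      split_ifs
      · rw [List.getLast?_cons, hf]; rfl
      · exact hf
    by_cases hl : ∃ f ∈ l, src f = v
    · exact Relation.ReflTransGen.mono mono _ _ (ih h v (.inr hl))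
    · have hv' : v = src e := by
        obtain h | ⟨f, hf, hfv⟩ := hv
        · exact h
        · rcases List.mem_cons.1 hf with rfl | hf
          · exact hfv.symm
          · exact absurd ⟨f, hf, hfv⟩ hl
      subst hv'
      refine .head ⟨e, ?_, rfl⟩ (Relation.ReflTransGen.mono mono _ _ (ih h _ (.inl rfl)))
      have : l.filter (src · = src e) = [] := by
        rw [List.filter_eq_nil_iff]
        intro f hf hfe
        exact hl ⟨f, hf, by simpa using hfe⟩
      simp [this]

theorem exists_maximal_trail [Fintype V] [DecidableEq V] (m : ℕ) (σ : V → List E)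
    (hm : ∑ v, (σ v).length = m) (hσ : ∀ v, ∀ e ∈ σ v, src e = v) (x : V) :
    ∃ l y, ∃ ρ : V → List E, IsTrail src tgt x l y ∧
      (∀ v, σ v = l.filter (src · = v) ++ ρ v) ∧ ρ y = [] := by
  induction m generalizing σ x with
  | zero =>
    refine ⟨[], x, σ, rfl, fun v => rfl, ?_⟩
    have := (Finset.sum_eq_zero_iff.1 hm) x (Finset.mem_univ _)
    simpa using this
  | succ m ih =>
    rcases hx : σ x with _ | ⟨e, s⟩
    · exact ⟨[], x, σ, rfl, fun v => rfl, hx⟩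
    · have hsum : ∑ v, (Function.update σ x s v).length = m := by
        rw [← Finset.add_sum_erase _ _ (Finset.mem_univ x)] at hm ⊢
        have : ∑ v ∈ Finset.univ.erase x, (Function.update σ x s v).length =
            ∑ v ∈ Finset.univ.erase x, (σ v).length :=
          Finset.sum_congr rfl fun v hv => by
            rw [Function.update_of_ne (Finset.ne_of_mem_erase hv)]
        rw [this, Function.update_self]
        rw [hx, List.length_cons] at hm
        omega
      have hsrc : src e = x := hσ x e (by simp [hx])
      obtain ⟨l, y, ρ, hl, hρ, hy⟩ := ih (Function.update σ x s) hsum (by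
        intro v f hf
        by_cases hv : v = x
        · subst hv
          rw [Function.update_self] at hf
          exact hσ v f (by simp [hx, hf])
        · rw [Function.update_of_ne hv] at hf
          exact hσ v f hf) (tgt e)
      refine ⟨e :: l, y, ρ, ⟨hsrc, hl⟩, fun v => ?_, hy⟩
      have := hρ v
      by_cases hv : v = x
      · subst hv
        rw [Function.update_self] at this
        simp [hsrc, hx, this]
      · rw [Function.update_of_ne hv] at this
        rw [this, List.filter_cons, if_neg]
        simpa [hsrc] using Ne.symm hv

theorem countP_eq_card_inter [Fintype E] [DecidableEq E] {l : List E} (hl : l.Nodup)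
    (p : E → Prop) [DecidablePred p] :
    l.countP p = (Finset.univ.filter fun e => p e ∧ e ∈ l).card := by
  rw [List.countP_eq_length_filter, ← List.toFinset_card_of_nodup (hl.filter _)]
  congr 1
  ext e
  simp [and_comm]

variable [Fintype V] [DecidableEq V] [Fintype E] [DecidableEq E]

theorem IsArcOrdering.exists_tour {d : ℕ}
    (hout : ∀ v, (Finset.univ.filter fun e => src e = v).card = d)
    (hin : ∀ v, (Finset.univ.filter fun e => tgt e = v).card = d)
    {σ : V → List E} (hσ : IsArcOrdering src σ) {w : V}
    (hw : ∀ v, Relation.ReflTransGen (LastStep tgt σ) v w) :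
    ∃ l, IsEulerTour src tgt w l ∧ ∀ v, l.filter (src · = v) = σ v := by
  obtain ⟨l, y, ρ, hl, hρ, hy⟩ := exists_maximal_trail (src := src) (tgt := tgt) _ σ rfl
    (fun v e he => ((hσ v).2 e).1 he) w
  have hnd : l.Nodup := by
    rw [List.nodup_iff_count_le_one]
    intro e
    have h1 : (l.filter (src · = src e)).Nodup := by
      have := (hσ (src e)).1
      rw [hρ] at this
      exact this.of_append_left
    have := List.nodup_iff_count_le_one.1 h1 e
    rwa [List.count_filter (by simp)] at this
  have hmem : ∀ v, ρ v = [] → ∀ e, src e = v → e ∈ l := by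
    intro v hv e he
    have := ((hσ v).2 e).2 he
    rw [hρ, hv, List.append_nil] at this
    exact List.mem_of_mem_filter this
  have hcount : ∀ v, ρ v = [] → l.countP (src · = v) = d := by
    intro v hv
    rw [countP_eq_card_inter hnd, ← hout v]
    congr 1
    ext e
    simpa using hmem v hv e
  have hle : ∀ v, l.countP (tgt · = v) ≤ d := by
    intro v
    rw [countP_eq_card_inter hnd, ← hin v]
    exact Finset.card_le_card fun e => by simp +contextual
  have hyw : y = w := by
    by_contra hne
    have h1 := hl.count y
    rw [hcount y hy, if_pos rfl, if_neg (Ne.symm hne)] at h1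
    have := hle y
    omega
  subst hyw
  have hexh : ∀ v, ρ v = [] := by
    intro v
    induction hw v using Relation.ReflTransGen.head_induction_on with
    | refl => exact hy
    | @head a b hab _ ih =>
      obtain ⟨e, he, rfl⟩ := hab
      have h1 := hl.count (tgt e)
      rw [hcount _ ih, Nat.add_right_cancel_iff, countP_eq_card_inter hnd, ← hin (tgt e)] at h1
      have h2 := Finset.eq_of_subset_of_card_le (fun f => by simp +contextual) h1.ge
      have hel : e ∈ l := by
        have : e ∈ Finset.univ.filter fun f => tgt f = tgt e := by simp
        rw [← h2] at this
        exact (Finset.mem_filter.1 this).2.2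
      by_contra hne
      have hnd' := (hσ a).1
      rw [hρ a] at hnd' he
      have hsa : src e = a := by
        refine ((hσ a).2 e).1 ?_
        rw [hρ a]
        exact List.mem_of_getLast? he
      rw [List.getLast?_append_of_ne_nil _ hne] at he
      exact List.disjoint_of_nodup_append hnd' (List.mem_filter.2 ⟨hel, by simpa using hsa⟩)
        (List.mem_of_getLast? he)
  refine ⟨l, ⟨hnd, fun e => hmem _ (hexh _) e rfl, hl⟩, fun v => ?_⟩
  rw [hρ v, hexh v, List.append_nil]

/-- Eulerian tours at `w` correspond to arc orderings whose last arcs lead to `w`. -/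
theorem card_isEulerTour {d : ℕ} (hd : 0 < d)
    (hout : ∀ v, (Finset.univ.filter fun e => src e = v).card = d)
    (hin : ∀ v, (Finset.univ.filter fun e => tgt e = v).card = d) (w : V) :
    Nat.card {l // IsEulerTour src tgt w l} =
      Nat.card {σ // IsArcOrdering src σ ∧ ∀ v, Relation.ReflTransGen (LastStep tgt σ) v w} := by
  refine Nat.card_congr (Equiv.ofBijective (fun l => ⟨fun v => l.1.filter (src · = v),
    fun v => ⟨l.2.1.filter _, fun e => by simp [l.2.2.1 e]⟩, fun v => ?_⟩) ⟨?_, ?_⟩)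
  · refine l.2.2.2.reflTransGen_lastStep v (.inr ?_)
    obtain ⟨e, he⟩ := Finset.card_pos.1 ((hout v).symm ▸ hd)
    exact ⟨e, l.2.2.1 e, by simpa using he⟩
  · rintro ⟨l, hl⟩ ⟨l', hl'⟩ h
    simp only [Subtype.mk.injEq] at h ⊢
    exact hl.2.2.filter_inj hl'.2.2 (congrFun h)
  · rintro ⟨σ, hσ, hw⟩
    obtain ⟨l, hl, h⟩ := hσ.exists_tour hout hin hw
    exact ⟨⟨l, hl⟩, Subtype.ext (funext h)⟩

omit [Fintype E] in
theorem card_nodup_lists (F : Finset E) :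
    Nat.card {s : List E // s.Nodup ∧ ∀ e, e ∈ s ↔ e ∈ F} = F.card.factorial := by
  have : ∀ s : List E, (s.Nodup ∧ ∀ e, e ∈ s ↔ e ∈ F) ↔ s ∈ F.toList.permutations.toFinset := by
    intro s
    rw [List.mem_toFinset, List.mem_permutations]
    constructor
    · rintro ⟨h, h'⟩
      exact (List.perm_ext_iff_of_nodup h F.nodup_toList).2 (by simpa using h')
    · intro h
      exact ⟨h.nodup_iff.2 F.nodup_toList, fun e => by simp [h.mem_iff]⟩
  rw [Nat.card_congr (Equiv.subtypeEquivRight this), Nat.card_eq_fintype_card, Fintype.card_coe,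
    List.toFinset_card_of_nodup (List.nodup_permutations _ F.nodup_toList),
    List.length_permutations, Finset.length_toList]

omit [Fintype E] in
theorem card_nodup_lists_getLast (F : Finset E) {e₀ : E} (he : e₀ ∈ F) :
    Nat.card {s : List E // (s.Nodup ∧ ∀ e, e ∈ s ↔ e ∈ F) ∧ s.getLast? = some e₀} =
      (F.card - 1).factorial := by
  rw [← Finset.card_erase_of_mem he, ← card_nodup_lists]
  have key : ∀ s : List E, (s.Nodup ∧ ∀ e, e ∈ s ↔ e ∈ F.erase e₀) →
      ((s ++ [e₀]).Nodup ∧ ∀ e, e ∈ s ++ [e₀] ↔ e ∈ F) ∧ (s ++ [e₀]).getLast? = some e₀ := by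
    rintro s ⟨hs, hs'⟩
    refine ⟨⟨?_, fun e => ?_⟩, by simp⟩
    · rw [List.nodup_append]
      refine ⟨hs, by simp, ?_⟩
      rintro a ha b hb rfl
      have := (hs' a).1 ha
      simp_all
    · rw [List.mem_append, hs' e, Finset.mem_erase, List.mem_singleton]
      by_cases h : e = e₀ <;> simp [h, he]
  refine (Nat.card_congr (Equiv.ofBijective (fun s => ⟨s.1 ++ [e₀], key s.1 s.2⟩) ⟨?_, ?_⟩)).symm
  · rintro ⟨s, hs⟩ ⟨s', hs'⟩ h
    simpa using h
  · rintro ⟨s, ⟨hs, hs'⟩, h⟩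
    rw [List.getLast?_eq_some_iff] at h
    obtain ⟨t, rfl⟩ := h
    rw [List.nodup_append] at hs
    refine ⟨⟨t, hs.1, fun e => ?_⟩, rfl⟩
    rw [Finset.mem_erase, ← hs']
    constructor
    · intro h
      refine ⟨fun h' => hs.2.2 e h e₀ (by simp) h', by simp [h]⟩
    · rintro ⟨h1, h2⟩
      simpa [h1] using h2

/-- The choices of one arc out of every vertex such that following these arcs leads to `w`. -/
def IsArborescence (src tgt : E → V) (w : V) (φ : V → E) : Prop :=
  (∀ v, src (φ v) = v) ∧ ∀ v, Relation.ReflTransGen (fun a b => tgt (φ a) = b) v w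

theorem card_arcOrdering {d : ℕ} (hd : 0 < d)
    (hout : ∀ v, (Finset.univ.filter fun e => src e = v).card = d) (w : V) :
    Nat.card {σ // IsArcOrdering src σ ∧ ∀ v, Relation.ReflTransGen (LastStep tgt σ) v w} =
      Nat.card {φ // IsArborescence src tgt w φ} * (d - 1).factorial ^ Fintype.card V := by
  let T (φ : {φ // IsArborescence src tgt w φ}) (v : V) : Type _ := {s : List E //
    (s.Nodup ∧ ∀ e, e ∈ s ↔ e ∈ Finset.univ.filter fun e => src e = v) ∧ s.getLast? = some (φ.1 v)}
  have hT : ∀ φ v, Nat.card (T φ v) = (d - 1).factorial := fun φ v => by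
    rw [card_nodup_lists_getLast _ (by simpa using φ.2.1 v), hout]
  have hfin : ∀ φ v, Finite (T φ v) := fun φ v =>
    Nat.finite_of_card_ne_zero (by rw [hT]; exact Nat.factorial_ne_zero _)
  have hcard : Nat.card (Σ φ, ∀ v, T φ v) =
      Nat.card {φ // IsArborescence src tgt w φ} * (d - 1).factorial ^ Fintype.card V := by
    classical
    rw [Nat.card_sigma]
    simp [Nat.card_pi, hT, Nat.card_eq_fintype_card]
  rw [← hcard]
  have hstep : ∀ {φ : V → E} {σ : V → List E}, (∀ v, (σ v).getLast? = some (φ v)) →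
      LastStep tgt σ = fun a b => tgt (φ a) = b := by
    intro φ σ h
    ext a b
    simp [LastStep, h]
  have key : ∀ p : Σ φ, ∀ v, T φ v, IsArcOrdering src (fun v => (p.2 v).1) ∧
      ∀ v, Relation.ReflTransGen (LastStep tgt fun v => (p.2 v).1) v w := by
    refine fun p => ⟨fun v => ⟨(p.2 v).2.1.1, fun e => by simpa using (p.2 v).2.1.2 e⟩, fun v => ?_⟩
    rw [hstep fun v => (p.2 v).2.2]
    exact p.1.2.2 v
  refine (Nat.card_congr (Equiv.ofBijective (fun p => ⟨fun v => (p.2 v).1, key p⟩)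
    ⟨?_, ?_⟩)).symm
  · rintro ⟨⟨φ, hφ⟩, f⟩ ⟨⟨φ', hφ'⟩, f'⟩ h
    simp only [Subtype.mk.injEq] at h
    have : φ = φ' := by
      funext v
      have h1 := (f v).2.2
      have h2 := (f' v).2.2
      rw [congrFun h v, h2] at h1
      exact (Option.some_injective _ h1).symm
    subst this
    congr 1
    funext v
    exact Subtype.ext (congrFun h v)
  · rintro ⟨σ, hσ, hw⟩
    have hex : ∀ v, ∃ e, (σ v).getLast? = some e := by
      intro v
      obtain ⟨e, he⟩ := Finset.card_pos.1 ((hout v).symm ▸ hd)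
      have : e ∈ σ v := ((hσ v).2 e).2 (by simpa using he)
      exact ⟨_, List.getLast?_eq_getLast_of_ne_nil (List.ne_nil_of_mem this)⟩
    choose φ hφ using hex
    refine ⟨⟨⟨φ, fun v => ((hσ v).2 _).1 (List.mem_of_getLast? (hφ v)), ?_⟩, fun v =>
      ⟨σ v, ⟨(hσ v).1, fun e => by simpa using (hσ v).2 e⟩, hφ v⟩⟩, rfl⟩
    rw [← hstep hφ]
    exact hw


/-- The Laplacian of the functional digraph of `f`, with row `w` replaced by a unit vector. -/
def functionalLaplacian (w : V) (f : V → V) : Matrix V V ℚ :=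
  fun v => if v = w then Pi.single w 1 else Pi.single v 1 - Pi.single (f v) 1

open Classical in
theorem det_functionalLaplacian (w : V) (f : V → V) :
    (functionalLaplacian w f).det =
      if ∀ v, Relation.ReflTransGen (fun a b => f a = b) v w then 1 else 0 := by
  split_ifs with h
  · have hex : ∀ v, ∃ k, f^[k] v = w := by
      intro v
      induction h v using Relation.ReflTransGen.head_induction_on with
      | refl => exact ⟨0, rfl⟩
      | head hab _ ih =>
        obtain ⟨k, hk⟩ := ih
        exact ⟨k + 1, by rw [Function.iterate_succ_apply, hab, hk]⟩
    have hlt : ∀ v, v ≠ w → Nat.find (hex (f v)) < Nat.find (hex v) := by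
      intro v hv
      obtain ⟨k, hk⟩ : ∃ k, Nat.find (hex v) = k + 1 := by
        refine Nat.exists_eq_succ_of_ne_zero fun h0 => hv ?_
        have := Nat.find_spec (hex v)
        rwa [h0] at this
      have := Nat.find_spec (hex v)
      rw [hk] at this
      rw [hk, Nat.lt_succ_iff]
      exact Nat.find_min' _ this
    have htri : (functionalLaplacian w f).BlockTriangular
        (fun v => OrderDual.toDual (Nat.find (hex v))) := by
      intro i j hij
      have hij' : Nat.find (hex i) < Nat.find (hex j) := hij
      have h1 : j ≠ i := by rintro rfl; exact lt_irrefl _ hij'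
      unfold functionalLaplacian
      split_ifs with hi
      · subst hi; simp [h1]
      · have h2 : j ≠ f i := by
          rintro rfl
          exact absurd (hlt i hi) hij'.not_gt
        simp [h1, h2]
    rw [htri.det]
    refine Finset.prod_eq_one fun a _ => ?_
    convert Matrix.det_one (n := {v // OrderDual.toDual (Nat.find (hex v)) = a}) (R := ℚ) using 2
    ext ⟨i, hi⟩ ⟨j, hj⟩
    rw [Matrix.toSquareBlock_def, Matrix.of_apply, Matrix.one_apply]
    simp only [Subtype.mk.injEq]
    unfold functionalLaplacian
    split_ifs with h1 h2 h2
    · simp [← h1, ← h2]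
    · rw [Pi.single_eq_of_ne]
      exact fun h => h2 (h1.trans h.symm)
    · subst h2
      have : i ≠ f i := fun h => by
        have := hlt i h1
        rw [← h] at this
        exact lt_irrefl _ this
      simp [this]
    · have : j ≠ f i := by
        rintro rfl
        have := hlt i h1
        rw [← hj] at hi
        exact absurd (OrderDual.toDual.injective hi) this.ne'
      simp [Ne.symm h2, this]
  · rw [← Matrix.exists_mulVec_eq_zero_iff]
    push Not at h
    obtain ⟨v₀, h₀⟩ := h
    refine ⟨fun v => if Relation.ReflTransGen (fun a b => f a = b) v w then 0 else 1,
      fun h => ?_, ?_⟩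
    · simpa [h₀] using congrFun h v₀
    · ext v
      rw [Matrix.mulVec]
      unfold functionalLaplacian
      split_ifs with hv
      · simp [Relation.ReflTransGen.refl]
      · have : Relation.ReflTransGen (fun a b => f a = b) v w ↔
            Relation.ReflTransGen (fun a b => f a = b) (f v) w := by
          rw [Relation.ReflTransGen.cases_head_iff]
          simp [hv]
        rw [sub_dotProduct]
        simp [this]

/-- The Laplacian of the digraph with source and target maps `src` and `tgt`. -/
def arcLaplacian (src tgt : E → V) : Matrix V V ℚ :=
  fun v => ∑ e with src e = v, (Pi.single v 1 - Pi.single (tgt e) 1)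

omit [DecidableEq E] in
/-- The matrix-tree theorem. -/
theorem card_isArborescence (w : V) :
    (Nat.card {φ // IsArborescence src tgt w φ} : ℚ) =
      (Finset.univ.filter fun e => src e = w).card *
        ((arcLaplacian src tgt).updateRow w (Pi.single w 1)).det := by
  classical
  rw [← Matrix.det_updateRow_smul]
  have : (arcLaplacian src tgt).updateRow w
      (((Finset.univ.filter fun e => src e = w).card : ℚ) • Pi.single w 1) =
      fun v => ∑ e ∈ Finset.univ.filter (fun e => src e = v),
        (if v = w then Pi.single w 1 else Pi.single v 1 - Pi.single (tgt e) 1 : V → ℚ) := by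
    funext v
    by_cases h : v = w
    · subst h
      rw [Matrix.updateRow_self]
      simp only [if_true, Finset.sum_const, Nat.cast_smul_eq_nsmul]
    · rw [Matrix.updateRow_ne h]
      simp only [h, if_false]
      rfl
  rw [this]
  have h2 := (Matrix.detRowAlternating (n := V) (R := ℚ)).toMultilinearMap.map_sum_finset
    (fun v e => (if v = w then Pi.single w 1 else Pi.single v 1 - Pi.single (tgt e) 1 : V → ℚ))
    (fun v => Finset.univ.filter (fun e => src e = v))
  refine Eq.trans ?_ h2.symm
  have h3 : ∀ φ : V → E, (Matrix.detRowAlternating (n := V) (R := ℚ)).toMultilinearMap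
      (fun v => (if v = w then Pi.single w 1 else
        Pi.single v 1 - Pi.single (tgt (φ v)) 1 : V → ℚ)) =
      if ∀ v, Relation.ReflTransGen (fun a b => tgt (φ a) = b) v w then 1 else 0 := fun φ =>
    det_functionalLaplacian w fun v => tgt (φ v)
  rw [Finset.sum_congr rfl fun φ _ => h3 φ, Finset.sum_boole, Nat.card_eq_fintype_card,
    Fintype.card_subtype]
  congr 2
  ext φ
  rw [Finset.mem_filter_univ, Finset.mem_filter, Fintype.mem_piFinset]
  simp only [Finset.mem_filter_univ, IsArborescence]

omit [DecidableEq E] in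
theorem card_sq_mul_card_isArborescence {d : ℕ}
    (hout : ∀ v, (Finset.univ.filter fun e => src e = v).card = d)
    (hin : ∀ v, (Finset.univ.filter fun e => tgt e = v).card = d) (w : V) :
    (Fintype.card V : ℚ) ^ 2 * Nat.card {φ // IsArborescence src tgt w φ} =
      d * (arcLaplacian src tgt + Matrix.of fun _ _ => 1).det := by
  rw [card_isArborescence, hout w]
  set L := arcLaplacian src tgt with hL
  have hrow : L.mulVec 1 = 0 := by
    ext v
    change (∑ e with src e = v, (Pi.single v 1 - Pi.single (tgt e) 1 : V → ℚ)) ⬝ᵥ 1 = 0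
    rw [sum_dotProduct]
    exact Finset.sum_eq_zero fun e _ => by simp [sub_dotProduct]
  have hcol : Matrix.vecMul 1 L = 0 := by
    ext u
    have h1 : ∀ v, L v u = ∑ e, if src e = v then
        ((Pi.single (src e) 1 : V → ℚ) u - (Pi.single (tgt e) 1 : V → ℚ) u) else 0 := by
      intro v
      simp only [hL, arcLaplacian, Finset.sum_apply, Finset.sum_filter]
      refine Finset.sum_congr rfl fun e _ => ?_
      split_ifs with h
      · rw [h]; rfl
      · rfl
    have h2 : (Finset.univ.filter fun e => src e = u).card =
      (Finset.univ.filter fun e => tgt e = u).card := by rw [hout, hin]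
    simp only [Matrix.vecMul, dotProduct, Pi.one_apply, one_mul, h1, Pi.zero_apply]
    rw [Finset.sum_comm]
    simp only [Finset.sum_ite_eq, Finset.mem_univ, if_true, Finset.sum_sub_distrib,
      Pi.single_apply, Finset.sum_boole, eq_comm (a := u)]
    rw [h2, sub_self]
  set e : V → ℚ := Pi.single w 1 with he
  have hdetL : L.det = 0 := by
    rw [← Matrix.exists_mulVec_eq_zero_iff]
    exact ⟨1, fun h => one_ne_zero (congrFun h w), hrow⟩
  have hP : (L + Matrix.vecMulVec e e).det = (L.updateRow w e).det := by
    have : L + Matrix.vecMulVec e e = L.updateRow w (L w + e) := by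
      ext i j
      by_cases h : i = w
      · subst h; simp [he, Matrix.vecMulVec_apply]
      · simp [he, Matrix.vecMulVec_apply, h]
    rw [this, Matrix.det_updateRow_add, Matrix.updateRow_eq_self, hdetL, zero_add]
  have hdot : (1 : V → ℚ) ⬝ᵥ e = 1 := by simp [he]
  have hdot' : e ⬝ᵥ (1 : V → ℚ) = 1 := by simp [he]
  have hfac : (1 + Matrix.vecMulVec (1 - e) 1) * (L + Matrix.vecMulVec e e) *
      (1 + Matrix.vecMulVec 1 (1 - e)) = L + Matrix.of fun _ _ => 1 := by
    have h1 : (1 + Matrix.vecMulVec (1 - e) 1) * (L + Matrix.vecMulVec e e) =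
        L + Matrix.vecMulVec 1 e := by
      rw [add_mul, one_mul, mul_add, Matrix.vecMulVec_mul, hcol, Matrix.vecMulVec_mul_vecMulVec,
        hdot, Matrix.sub_vecMulVec]
      ext i j
      simp [Matrix.vecMulVec_apply]
      ring
    rw [h1, mul_add, mul_one, add_mul, Matrix.mul_vecMulVec, hrow, Matrix.vecMulVec_mul_vecMulVec,
      hdot', Matrix.vecMulVec_sub]
    ext i j
    simp
  have hdet1 : (1 + Matrix.vecMulVec (1 - e) 1).det = (Fintype.card V : ℚ) := by
    rw [Matrix.vecMulVec_eq Unit, Matrix.det_one_add_replicateCol_mul_replicateRow,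
      dotProduct_sub, hdot]
    simp [dotProduct]
  have hdet2 : (1 + Matrix.vecMulVec 1 (1 - e)).det = (Fintype.card V : ℚ) := by
    rw [Matrix.vecMulVec_eq Unit, Matrix.det_one_add_replicateCol_mul_replicateRow,
      sub_dotProduct, hdot']
    simp [dotProduct]
  rw [← hfac, Matrix.det_mul, Matrix.det_mul, hdet1, hdet2, hP]
  ring

end Euler

section TransitionDigraph

abbrev Pairs (n : ℕ) := {p : Fin n × Fin n // p.1 ≠ p.2}
abbrev Triples (n : ℕ) := {t : Fin n × Fin n × Fin n // t.1 ≠ t.2.1 ∧ t.1 ≠ t.2.2 ∧ t.2.1 ≠ t.2.2}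
variable {n : ℕ}

/-- The first two letters of a `3`-permutation. -/
def Triples.src (t : Triples n) : Pairs n := ⟨(t.1.1, t.1.2.1), t.2.1⟩

/-- The last two letters of a `3`-permutation. -/
def Triples.tgt (t : Triples n) : Pairs n := ⟨(t.1.2.1, t.1.2.2), t.2.2.2⟩

theorem card_ne_and_ne {a b : Fin n} (h : a ≠ b) :
    (Finset.univ.filter fun c => a ≠ c ∧ b ≠ c).card = n - 2 := by
  have : (Finset.univ.filter fun c => a ≠ c ∧ b ≠ c) = {a, b}ᶜ := by
    ext c
    simp [eq_comm]
  rw [this, Finset.card_compl, Finset.card_pair h, Fintype.card_fin]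

theorem card_src_eq (v : Pairs n) :
    (Finset.univ.filter fun e : Triples n => e.src = v).card = n - 2 := by
  rw [← card_ne_and_ne v.2]
  refine Finset.card_bij (fun e _ => e.1.2.2) ?_ ?_ ?_
  · rintro ⟨⟨a, b, c⟩, h⟩ he
    obtain rfl := (Finset.mem_filter.1 he).2
    rw [Finset.mem_filter_univ]
    exact h.2
  · rintro ⟨⟨a, b, c⟩, h⟩ he ⟨⟨a', b', c'⟩, h'⟩ he' hc
    obtain rfl := (Finset.mem_filter.1 he).2
    have := (Finset.mem_filter.1 he').2
    simp_all [Triples.src]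
  · intro c hc
    simp only [Finset.mem_filter_univ] at hc
    exact ⟨⟨(v.1.1, v.1.2, c), v.2, hc⟩, by rw [Finset.mem_filter_univ]; rfl, rfl⟩

theorem card_tgt_eq (v : Pairs n) :
    (Finset.univ.filter fun e : Triples n => e.tgt = v).card = n - 2 := by
  rw [← card_ne_and_ne v.2]
  refine Finset.card_bij (fun e _ => e.1.1) ?_ ?_ ?_
  · rintro ⟨⟨a, b, c⟩, h⟩ he
    obtain rfl := (Finset.mem_filter.1 he).2
    rw [Finset.mem_filter_univ]
    exact ⟨h.1.symm, h.2.1.symm⟩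
  · rintro ⟨⟨a, b, c⟩, h⟩ he ⟨⟨a', b', c'⟩, h'⟩ he' hc
    obtain rfl := (Finset.mem_filter.1 he).2
    have := (Finset.mem_filter.1 he').2
    simp_all [Triples.tgt]
  · intro c hc
    simp only [Finset.mem_filter_univ] at hc
    exact ⟨⟨(c, v.1.1, v.1.2), hc.1.symm, hc.2.symm, v.2⟩, by rw [Finset.mem_filter_univ]; rfl, rfl⟩

theorem card_pairs (n : ℕ) : Fintype.card (Pairs n) = n * (n - 1) := by
  have h : (Finset.univ.filter fun p : Fin n × Fin n => p.1 ≠ p.2) = Finset.univ.offDiag := by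
    ext p
    simp
  rw [Fintype.card_subtype, h, Finset.offDiag_card, Finset.card_univ, Fintype.card_fin,
    Nat.mul_sub, mul_one]

theorem card_triples (n : ℕ) : Fintype.card (Triples n) = n * (n - 1) * (n - 2) := by
  rw [← Finset.card_univ, Finset.card_eq_sum_card_fiberwise (f := Triples.src) (t := Finset.univ)
    (by simp), Finset.sum_congr rfl fun v _ => card_src_eq v, Finset.sum_const, Finset.card_univ,
    card_pairs, smul_eq_mul]

theorem card_src_tgt_eq (v u : Pairs n) :
    (Finset.univ.filter fun e : Triples n => e.src = v ∧ e.tgt = u).card =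
      if v.1.2 = u.1.1 ∧ v.1.1 ≠ u.1.2 then 1 else 0 := by
  split_ifs with h
  · rw [Finset.card_eq_one]
    refine ⟨⟨(v.1.1, v.1.2, u.1.2), v.2, h.2, h.1 ▸ u.2⟩, ?_⟩
    ext ⟨⟨a, b, c⟩, he⟩
    obtain ⟨⟨v1, v2⟩, hv⟩ := v
    obtain ⟨⟨u1, u2⟩, hu⟩ := u
    simp only [Triples.src, Triples.tgt, Finset.mem_filter_univ, Finset.mem_singleton,
      Subtype.mk.injEq, Prod.mk.injEq] at h ⊢
    grind
  · rw [Finset.card_eq_zero, Finset.filter_eq_empty_iff]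
    rintro ⟨⟨a, b, c⟩, he⟩ - ⟨rfl, rfl⟩
    exact h ⟨rfl, he.2.1⟩

namespace TransitionMatrix

/-- The incidence of a pair with its last letter. -/
def head (n : ℕ) : Matrix (Pairs n) (Fin n) ℚ := fun v x => if v.1.2 = x then 1 else 0

/-- The incidence of a pair with its first letter. -/
def tail (n : ℕ) : Matrix (Fin n) (Pairs n) ℚ := fun x v => if v.1.1 = x then 1 else 0

/-- The permutation matrix of the reversal of pairs. -/
def rev (n : ℕ) : Matrix (Pairs n) (Pairs n) ℚ :=
  fun v u => if u.1 = v.1.swap then 1 else 0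

theorem rev_mul {α : Type*} (M : Matrix (Pairs n) α ℚ) (v : Pairs n) (x : α) :
    (rev n * M) v x = M ⟨v.1.swap, v.2.symm⟩ x := by
  rw [Matrix.mul_apply, Finset.sum_eq_single ⟨v.1.swap, v.2.symm⟩]
  · simp [rev]
  · intro u _ hu
    rw [rev, if_neg, zero_mul]
    exact fun h => hu (Subtype.ext h)
  · simp

theorem rev_mul_rev : rev n * rev n = 1 := by
  ext v u
  rw [rev_mul, rev, Matrix.one_apply]
  simp only [Prod.swap_swap]
  simp only [Subtype.ext_iff, eq_comm]

theorem head_mul_mul_tail (K : Matrix (Fin n) (Fin n) ℚ) (v u : Pairs n) :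
    (head n * K * tail n) v u = K v.1.2 u.1.1 := by
  simp [Matrix.mul_apply, head, tail]

theorem sum_pairs (f : Fin n → Fin n → ℚ) :
    ∑ v : Pairs n, f v.1.1 v.1.2 = ∑ a, ∑ b, if a ≠ b then f a b else 0 := by
  rw [← Finset.sum_subtype (Finset.univ.filter fun p : Fin n × Fin n => p.1 ≠ p.2) (by simp)
    (fun p => f p.1 p.2), Finset.sum_filter, Fintype.sum_prod_type]

theorem tail_mul_head : tail n * head n = Matrix.of (fun _ _ => 1) - 1 := by
  ext x y
  rw [Matrix.mul_apply]
  simp only [tail, head]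
  rw [sum_pairs fun a b => (if a = x then (1 : ℚ) else 0) * (if b = y then 1 else 0),
    Finset.sum_eq_single x, Finset.sum_eq_single y]
  · by_cases h : x = y <;> simp [h]
  · intro b _ hb; simp [hb]
  · simp
  · intro b _ hb; simp [hb]
  · simp

theorem tail_mul_rev_mul_head : tail n * (rev n * head n) = ((n - 1 : ℕ) : ℚ) • 1 := by
  ext x y
  rw [Matrix.mul_apply]
  simp only [rev_mul]
  simp only [tail, head, Prod.snd_swap]
  rw [sum_pairs fun a b => (if a = x then (1 : ℚ) else 0) * (if a = y then 1 else 0),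
    Finset.sum_eq_single x]
  · by_cases h : x = y
    · subst h
      have : (Finset.univ.filter fun b => x ≠ b).card = n - 1 := by
        rw [Finset.filter_ne, Finset.card_erase_of_mem (Finset.mem_univ _), Finset.card_univ,
          Fintype.card_fin]
      simp only [if_true, mul_one, ← this, Finset.sum_boole]
      simp
    · simp [h]
  · intro b _ hb; simp [hb]
  · simp

theorem arcLaplacian_add (n : ℕ) :
    arcLaplacian (Triples.src (n := n)) Triples.tgt + Matrix.of (fun _ _ => 1) =
      ((n - 2 : ℕ) : ℚ) • 1 + rev n - head n * (1 - Matrix.of fun _ _ => 1 : Matrix (Fin n) (Fin n) ℚ) * tail n := by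
  ext v u
  rw [Matrix.sub_apply, head_mul_mul_tail]
  have h1 : arcLaplacian (Triples.src (n := n)) Triples.tgt v u =
      ((n - 2 : ℕ) : ℚ) * (if v = u then 1 else 0) -
        (if v.1.2 = u.1.1 ∧ v.1.1 ≠ u.1.2 then 1 else 0) := by
    have h2 : ((Finset.univ.filter fun e : Triples n => e.src = v ∧ e.tgt = u).card : ℚ) =
        if v.1.2 = u.1.1 ∧ v.1.1 ≠ u.1.2 then 1 else 0 := by
      rw [card_src_tgt_eq]
      push_cast
      rfl
    rw [arcLaplacian, Finset.sum_apply]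
    simp only [Pi.sub_apply, Finset.sum_sub_distrib, Finset.sum_const, card_src_eq, nsmul_eq_mul]
    rw [← h2, ← Finset.filter_filter, Finset.card_filter]
    simp [Pi.single_apply, eq_comm (a := u)]
  simp only [Matrix.add_apply, h1, Matrix.of_apply, Matrix.smul_apply, Matrix.one_apply, rev,
    Matrix.sub_apply, smul_eq_mul]
  obtain ⟨⟨a, b⟩, hv⟩ := v
  obtain ⟨⟨c, d⟩, hu⟩ := u
  simp only [Subtype.mk.injEq, Prod.mk.injEq, Prod.swap_prod_mk]
  have h2 : (c = b ∧ d = a) ↔ (b = c ∧ a = d) := and_congr eq_comm eq_comm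
  simp only [h2]
  by_cases hb : b = c <;> by_cases ha : a = d <;> simp [hb, ha]

theorem det_add_rev_sq (n : ℕ) (x : ℚ) :
    (x • 1 + rev n).det ^ 2 = (x ^ 2 - 1) ^ (n * (n - 1)) := by
  have h1 : (x • 1 + rev n) * (x • 1 - rev n) = (x ^ 2 - 1) • 1 := by
    rw [add_mul, mul_sub, mul_sub, rev_mul_rev]
    ext i j
    simp
    ring
  let s : Pairs n → ℚ := fun v => if v.1.1 < v.1.2 then 1 else -1
  have hs : ∀ v, s v * s v = 1 := fun v => by
    simp only [s]; split_ifs <;> norm_num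
  have h2 : Matrix.diagonal s * (x • 1 + rev n) * Matrix.diagonal s = x • 1 - rev n := by
    ext v u
    rw [Matrix.mul_diagonal, Matrix.diagonal_mul]
    simp only [Matrix.add_apply, Matrix.sub_apply, Matrix.smul_apply, smul_eq_mul,
      Matrix.one_apply]
    by_cases huv : v = u
    · subst huv
      have : rev n v v = 0 := by
        rw [rev, if_neg]
        exact fun h => v.2 (congrArg Prod.fst h)
      rw [this]
      simp only [if_true, mul_one, add_zero, sub_zero]
      rw [mul_right_comm, hs, one_mul]
    · by_cases hr : u.1 = v.1.swap
      · have : s v * s u = -1 := by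
          have hv := v.2
          simp only [s, hr, Prod.fst_swap, Prod.snd_swap]
          rcases lt_or_gt_of_ne hv with h | h <;> simp [h, h.not_gt]
        simp [huv, rev, hr, this]
      · simp [huv, rev, hr]
  have h3 : (Matrix.diagonal s).det * (Matrix.diagonal s).det = 1 := by
    rw [← Matrix.det_mul, Matrix.diagonal_mul_diagonal]
    simp [hs]
  have h4 : (x • 1 - rev n).det = (x • 1 + rev n).det := by
    rw [← h2, Matrix.det_mul, Matrix.det_mul, mul_right_comm, h3, one_mul]
  have h5 := congrArg Matrix.det h1
  rw [Matrix.det_mul, h4, Matrix.det_smul, Matrix.det_one, mul_one, card_pairs] at h5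
  rw [sq, h5]

theorem det_smul_one_add (n : ℕ) {α : ℚ} (hα : α ≠ 0) (β : ℚ) :
    (α • 1 + β • Matrix.of fun _ _ => 1 : Matrix (Fin (n + 1)) (Fin (n + 1)) ℚ).det =
      α ^ n * (α + (n + 1) * β) := by
  have : (α • 1 + β • Matrix.of fun _ _ => 1 : Matrix (Fin (n + 1)) (Fin (n + 1)) ℚ) =
      α • (1 + Matrix.vecMulVec (fun _ => β / α) 1) := by
    ext i j
    simp [mul_add, mul_div_cancel₀ _ hα]
  rw [this, Matrix.det_smul, Matrix.vecMulVec_eq Unit,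
    Matrix.det_one_add_replicateCol_mul_replicateRow]
  simp [dotProduct]
  field_simp
  ring

theorem det_arcLaplacian_add_sq (n : ℕ) :
    (arcLaplacian (Triples.src (n := n + 4)) Triples.tgt + Matrix.of (fun _ _ => 1)).det ^ 2 =
      (((n + 4) * ((n + 3) * (n + 1)) ^ ((n + 3) * (n + 2) / 2) *
        ((n + 4) * (n + 2)) ^ (n + 3) : ℕ) : ℚ) ^ 2 := by
  set c : ℚ := (n + 3) * (n + 1) with hc
  have hc0 : c ≠ 0 := by positivity
  set d : ℚ := n + 2 with hd
  have hdc : d ^ 2 - 1 = c := by rw [hd, hc]; ring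
  have h1 : (d • 1 + rev (n + 4)) * (d • 1 - rev (n + 4)) = c • 1 := by
    rw [add_mul, mul_sub, mul_sub, rev_mul_rev, ← hdc]
    ext i j
    simp
    ring
  have h2 : (n + 4 - 2 : ℕ) = d := by rw [hd]; push_cast; rfl
  have h3 : tail (n + 4) * (d • 1 - rev (n + 4)) * head (n + 4) =
      d • Matrix.of (fun _ _ => 1) - (2 * n + 5 : ℚ) • 1 := by
    rw [Matrix.mul_assoc, Matrix.sub_mul, Matrix.mul_sub, tail_mul_rev_mul_head, Matrix.smul_mul, Matrix.one_mul,
      Matrix.mul_smul, tail_mul_head, smul_sub, hd]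
    ext i j
    simp
    ring
  have h4 : arcLaplacian (Triples.src (n := n + 4)) Triples.tgt + Matrix.of (fun _ _ => 1) =
      (d • 1 + rev (n + 4)) * (1 - (c⁻¹ • ((d • 1 - rev (n + 4)) * head (n + 4) *
        (1 - Matrix.of fun _ _ => 1 : Matrix (Fin (n + 4)) (Fin (n + 4)) ℚ))) * tail (n + 4)) := by
    rw [arcLaplacian_add, h2, mul_sub, mul_one, Matrix.smul_mul, Matrix.mul_smul]
    congr 1
    rw [← Matrix.mul_assoc, ← Matrix.mul_assoc, ← Matrix.mul_assoc, h1]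
    simp [hc0]
  have hJ : (Matrix.of (fun _ _ => 1) : Matrix (Fin (n + 4)) (Fin (n + 4)) ℚ) *
      Matrix.of (fun _ _ => 1) = (n + 4 : ℚ) • Matrix.of (fun _ _ => 1) := by
    ext i j
    simp [Matrix.mul_apply]
  have h5 : 1 - tail (n + 4) * (c⁻¹ • ((d • 1 - rev (n + 4)) * head (n + 4) *
        (1 - Matrix.of fun _ _ => 1 : Matrix (Fin (n + 4)) (Fin (n + 4)) ℚ))) =
      ((n + 4) * (n + 2) / c) • 1 + ((n ^ 2 + 3 * n + 1) / c) • Matrix.of fun _ _ => 1 := by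
    rw [Matrix.mul_smul, ← Matrix.mul_assoc, ← Matrix.mul_assoc, h3, mul_sub, mul_one, sub_mul,
      smul_mul_assoc, hJ]
    ext i j
    simp
    rw [hd]
    field_simp
    rw [hc]
    ring
  rw [h4, Matrix.det_mul, Matrix.det_one_sub_mul_comm, h5, mul_pow, det_add_rev_sq, hdc,
    det_smul_one_add _ (by positivity)]
  have h6 : (n + 4) * (n + 4 - 1) = 2 * ((n + 3) * (n + 2) / 2) + 2 * (n + 3) := by
    have : 2 * ((n + 3) * (n + 2) / 2) = (n + 3) * (n + 2) :=
      Nat.mul_div_cancel' (by rw [mul_comm]; exact (Nat.even_mul_succ_self _).two_dvd)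
    rw [this, Nat.add_sub_assoc (by norm_num)]
    ring
  have h7 : ((n : ℚ) + 4) * (n + 2) / c + ((n + 3 : ℕ) + 1) * ((n ^ 2 + 3 * n + 1) / c) =
      n + 4 := by
    field_simp
    rw [hc]
    push_cast
    ring
  rw [h7, h6]
  push_cast
  rw [← hc, pow_add, pow_mul, pow_mul, div_pow]
  field_simp
  ring_nf

theorem card_isArborescence_triples (n : ℕ) (w : Pairs (n + 4)) :
    Nat.card {φ // IsArborescence Triples.src Triples.tgt w φ} = (n + 2) *
      ((n + 1) ^ ((n + 3) * (n + 2) / 2) * (n + 2) ^ (n + 3) *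
        (n + 3) ^ ((n + 3) * (n + 2) / 2 - 2) * (n + 4) ^ (n + 2)) := by
  have h := card_sq_mul_card_isArborescence card_src_eq card_tgt_eq w
  have h1 := congrArg (· ^ 2) h
  simp only [mul_pow, det_arcLaplacian_add_sq, card_pairs] at h1
  norm_cast at h1
  rw [← mul_pow, ← mul_pow] at h1
  replace h1 := Nat.pow_left_injective (n := 2) (by norm_num) h1
  obtain ⟨k, hk⟩ : ∃ k, (n + 3) * (n + 2) / 2 = k + 2 := by
    refine Nat.exists_eq_add_of_le' ?_
    rw [Nat.le_div_iff_mul_le (by norm_num)]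
    nlinarith
  have e1 : n + 4 - 1 = n + 3 := rfl
  have e2 : n + 4 - 2 = n + 2 := rfl
  rw [hk, e1, e2] at h1
  rw [hk, Nat.add_sub_cancel]
  have hpos : 0 < ((n + 4) * (n + 3)) ^ 2 := by positivity
  refine Nat.eq_of_mul_eq_mul_left hpos (h1.trans ?_)
  ring

end TransitionMatrix

end TransitionDigraph

section Tours

variable {V E : Type*} {src tgt : E → V}

theorem isTrail_map_range (f : ℕ → E) (hf : ∀ k, tgt (f k) = src (f (k + 1))) (m : ℕ) :
    IsTrail src tgt (src (f 0)) ((List.range m).map f) (src (f m)) := by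
  induction m generalizing f with
  | zero => rfl
  | succ m ih =>
    rw [List.range_succ_eq_map, List.map_cons, List.map_map]
    refine ⟨rfl, ?_⟩
    rw [hf]
    exact ih (fun k => f (k + 1)) fun k => hf (k + 1)

theorem IsTrail.src_getElem_zero {l : List E} {x y : V} (h : IsTrail src tgt x l y)
    (hl : 0 < l.length) : src l[0] = x := by
  cases l with
  | nil => simp at hl
  | cons e l => exact h.1

theorem IsTrail.tgt_getElem {l : List E} {x y : V} (h : IsTrail src tgt x l y) (i : ℕ)
    (hi : i < l.length) : tgt l[i] = if h' : i + 1 < l.length then src l[i + 1] else y := by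
  induction l generalizing x i with
  | nil => simp at hi
  | cons e l ih =>
    cases i with
    | zero =>
      split_ifs with h'
      · exact (h.2.src_getElem_zero (by simpa using h')).symm
      · have : l = [] := by simpa using h'
        subst this
        exact h.2
    | succ i => simpa using ih h.2 i (by simpa using hi)

/-- A cyclic enumeration of all arcs in which consecutive arcs are adjacent. -/
def IsEulerCycle (src tgt : E → V) {N : ℕ} (e : ZMod N → E) : Prop :=
  Function.Bijective e ∧ ∀ i, tgt (e i) = src (e (i + 1))

theorem card_isEulerCycle [Fintype V] [Fintype E] {N : ℕ} [NeZero N] (hN : Fintype.card E = N) :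
    Nat.card {e : ZMod N → E // IsEulerCycle src tgt e} =
      Nat.card (Σ w, {l // IsEulerTour src tgt w l}) := by
  classical
  have key : ∀ e : ZMod N → E, IsEulerCycle src tgt e →
      IsEulerTour src tgt (src (e 0)) ((List.range N).map fun k : ℕ => e (k : ZMod N)) := by
    refine fun e he => ⟨?_, fun a => ?_, ?_⟩
    · refine List.Nodup.map_on ?_ List.nodup_range
      intro a ha b hb hab
      rw [List.mem_range] at ha hb
      have := congrArg ZMod.val (he.1.1 hab)
      rwa [ZMod.val_natCast_of_lt ha, ZMod.val_natCast_of_lt hb] at this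
    · obtain ⟨i, rfl⟩ := he.1.2 a
      refine List.mem_map.2 ⟨i.val, List.mem_range.2 i.val_lt, ?_⟩
      rw [ZMod.natCast_zmod_val]
    · have := isTrail_map_range (src := src) (tgt := tgt) (fun k : ℕ => e (k : ZMod N))
        (fun k => by rw [he.2]; push_cast; rfl) N
      simpa using this
  refine Nat.card_congr (Equiv.ofBijective (fun e => ⟨_, _, key e.1 e.2⟩) ⟨?_, ?_⟩)
  · rintro ⟨e, he⟩ ⟨e', he'⟩ h
    have h' := congrArg (fun p : Σ w, {l // IsEulerTour src tgt w l} => p.2.1) h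
    simp only [List.map_inj_left, List.mem_range] at h'
    refine Subtype.ext (funext fun i => ?_)
    have := h' i.val i.val_lt
    rwa [ZMod.natCast_zmod_val] at this
  · rintro ⟨w, l, hl⟩
    have hlen : l.length = N := by
      rw [← hN, ← List.toFinset_card_of_nodup hl.1, ← Finset.card_univ]
      congr 1
      ext e
      simp [hl.2.1]
    let e : ZMod N → E := fun i => l[i.val]'(hlen ▸ i.val_lt)
    have hcast : ∀ k (hk : k < l.length), e (k : ZMod N) = l[k] := by
      intro k hk
      simp only [e, ZMod.val_natCast_of_lt (hlen ▸ hk : k < N)]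
    have hzero : e 0 = l[0]'(hlen ▸ NeZero.pos N) := by
      rw [← hcast, Nat.cast_zero]
    have hsrc : src (e 0) = w := by
      rw [hzero]
      exact hl.2.2.src_getElem_zero _
    have he : IsEulerCycle src tgt e := by
      refine ⟨⟨fun i j hij => ?_, fun a => ?_⟩, fun i => ?_⟩
      · exact ZMod.val_injective N ((hl.1.getElem_inj_iff).1 hij)
      · obtain ⟨k, hk, rfl⟩ := List.getElem_of_mem (hl.2.1 a)
        exact ⟨k, hcast k hk⟩
      · have h1 := hl.2.2.tgt_getElem i.val (hlen ▸ i.val_lt)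
        rw [← hcast, ZMod.natCast_zmod_val] at h1
        rw [h1]
        have hi : i + 1 = ((i.val + 1 : ℕ) : ZMod N) := by
          push_cast
          rw [ZMod.natCast_zmod_val]
        split_ifs with h2
        · rw [hi, hcast _ h2]
        · have : i.val + 1 = N := by
            have := i.val_lt
            omega
          rw [hi, this, ZMod.natCast_self, hsrc]
    have hlist : (List.range N).map (fun k : ℕ => e (k : ZMod N)) = l := by
      refine List.ext_getElem (by simp [hlen]) fun k h1 h2 => ?_
      simp [hcast k h2]
    refine ⟨⟨e, he⟩, ?_⟩
    subst hsrc
    exact Sigma.ext rfl (heq_of_eq (Subtype.ext hlist))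

end Tours

theorem isUniversalCycle_iff {n N : ℕ} (c : ZMod N → Fin n) :
    IsUniversalCycle n 3 N c ↔
      ∀ t : Triples n, ∃! i, t.1 = (c i, c (i + 1), c (i + 2)) := by
  have h : ∀ (i : ZMod N) (w : Fin 3 → Fin n), (∀ j : Fin 3, c (i + (j : ℕ)) = w j) ↔
      (w 0, w 1, w 2) = (c i, c (i + 1), c (i + 2)) := by
    intro i w
    simp [Fin.forall_fin_succ, eq_comm, one_add_one_eq_two]
  constructor
  · rintro hc ⟨⟨a, b, d⟩, h1, h2, h3⟩
    have := hc ![a, b, d] (by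
      intro i j hij
      fin_cases i <;> fin_cases j <;> simp_all)
    simp only [h] at this
    exact this
  · intro hc w hw
    have := hc ⟨(w 0, w 1, w 2), hw.ne (by decide), hw.ne (by decide), hw.ne (by decide)⟩
    simpa only [h] using this

theorem IsUniversalCycle.exists_triples {n N : ℕ} [NeZero N] (hN : N = n * (n - 1) * (n - 2))
    {c : ZMod N → Fin n} (hc : IsUniversalCycle n 3 N c) :
    ∃ e : ZMod N → Triples n, Function.Bijective e ∧
      ∀ i, (e i).1 = (c i, c (i + 1), c (i + 2)) := by
  rw [isUniversalCycle_iff] at hc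
  choose p hp _ using hc
  have hinj : Function.Injective p := fun t t' h =>
    Subtype.ext ((hp t).trans (by rw [h, ← hp t']))
  have hbij : Function.Bijective p :=
    (Fintype.bijective_iff_injective_and_card p).2 ⟨hinj, by rw [card_triples, ZMod.card, hN]⟩
  refine ⟨(Equiv.ofBijective p hbij).symm, (Equiv.ofBijective p hbij).symm.bijective, fun i => ?_⟩
  have := hp ((Equiv.ofBijective p hbij).symm i)
  rwa [show p ((Equiv.ofBijective p hbij).symm i) = i from
    (Equiv.ofBijective p hbij).apply_symm_apply i] at this

theorem card_isUniversalCycle {n N : ℕ} [NeZero N] (hN : N = n * (n - 1) * (n - 2)) :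
    Nat.card {c : ZMod N → Fin n // IsUniversalCycle n 3 N c} =
      Nat.card {e : ZMod N → Triples n // IsEulerCycle Triples.src Triples.tgt e} := by
  have hwin : ∀ e : ZMod N → Triples n, IsEulerCycle Triples.src Triples.tgt e → ∀ i,
      (e i).1 = ((e i).1.1, (e (i + 1)).1.1, (e (i + 2)).1.1) := by
    intro e he i
    have h1 := congrArg Subtype.val (he.2 i)
    have h2 := congrArg Subtype.val (he.2 (i + 1))
    simp only [Triples.src, Triples.tgt, Prod.mk.injEq, add_assoc, one_add_one_eq_two] at h1 h2
    rw [← h2.1, ← h1.1, ← h1.2]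
  have key : ∀ e : ZMod N → Triples n, IsEulerCycle Triples.src Triples.tgt e →
      IsUniversalCycle n 3 N fun i => (e i).1.1 := by
    intro e he
    rw [isUniversalCycle_iff]
    intro t
    simp only [← hwin e he, ← Subtype.ext_iff]
    obtain ⟨i, rfl⟩ := he.1.2 t
    exact ⟨i, rfl, fun j hj => he.1.1 hj.symm⟩
  refine (Nat.card_congr (Equiv.ofBijective (fun e => ⟨fun i => (e.1 i).1.1, key e.1 e.2⟩)
    ⟨?_, ?_⟩)).symm
  · rintro ⟨e, he⟩ ⟨e', he'⟩ h
    simp only [Subtype.mk.injEq] at h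
    refine Subtype.ext (funext fun i => Subtype.ext ?_)
    change (e i).1 = (e' i).1
    rw [hwin e he, hwin e' he', congrFun h i, congrFun h (i + 1), congrFun h (i + 2)]
  · rintro ⟨c, hc⟩
    obtain ⟨e, he, hwin⟩ := hc.exists_triples hN
    refine ⟨⟨e, he, fun i => Subtype.ext ?_⟩, Subtype.ext (funext fun i => by simp [hwin])⟩
    simp only [Triples.src, Triples.tgt, hwin, add_assoc, one_add_one_eq_two]

theorem IsUniversalCycle.shift {n k N : ℕ} {c : ZMod N → Fin n} (hc : IsUniversalCycle n k N c)
    (t : ZMod N) : IsUniversalCycle n k N fun i => c (i + t) := by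
  intro w hw
  obtain ⟨i, hi, huniq⟩ := hc w hw
  refine ⟨i - t, fun j => ?_, fun i' hi' => ?_⟩
  · beta_reduce
    rw [← hi j, add_right_comm, sub_add_cancel]
  · rw [eq_sub_iff_add_eq]
    refine huniq _ fun j => ?_
    rw [← hi' j, add_right_comm]

theorem rotEquiv_equivalence (n k N : ℕ) : Equivalence (RotEquiv (n := n) (k := k) (N := N)) where
  refl c := ⟨0, fun i => by rw [add_zero]⟩
  symm := by
    rintro c c' ⟨t, ht⟩
    exact ⟨-t, fun i => by rw [ht, neg_add_cancel_right]⟩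
  trans := by
    rintro c c' c'' ⟨t, ht⟩ ⟨t', ht'⟩
    exact ⟨t' + t, fun i => by rw [ht', ht, add_assoc]⟩

theorem card_quot_rotEquiv {n N : ℕ} [NeZero N] (hN : N = n * (n - 1) * (n - 2)) :
    Nat.card (Quot (RotEquiv (n := n) (k := 3) (N := N))) * N =
      Nat.card {c : ZMod N → Fin n // IsUniversalCycle n 3 N c} := by
  refine (show _ = Nat.card (Quot (RotEquiv (n := n) (k := 3) (N := N)) × ZMod N) by
    rw [Nat.card_prod, Nat.card_zmod]).trans ?_
  refine Nat.card_congr (Equiv.ofBijective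
    (fun p => ⟨fun i => p.1.out.1 (i + p.2), p.1.out.2.shift p.2⟩) ⟨?_, ?_⟩)
  · rintro ⟨q, t⟩ ⟨q', t'⟩ h
    simp only [Subtype.mk.injEq] at h
    have hq : q = q' := by
      rw [← q.out_eq, ← q'.out_eq]
      refine Quot.sound ⟨t - t', fun i => ?_⟩
      have := congrFun h (i - t')
      simp only [sub_add_cancel] at this
      rw [← this, sub_add_eq_add_sub, add_sub_assoc]
    subst hq
    obtain ⟨e, he, hwin⟩ := q.out.2.exists_triples hN
    congr 1
    refine he.1 (Subtype.ext ?_)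
    rw [hwin, hwin]
    have hshift : ∀ i, q.out.1 (t + i) = q.out.1 (t' + i) := fun i => by
      rw [add_comm t, add_comm t']
      exact congrFun h i
    have h0 := hshift 0
    rw [add_zero, add_zero] at h0
    rw [h0, hshift, hshift]
  · intro c
    have h : RotEquiv (Quot.mk RotEquiv c).out c :=
      (rotEquiv_equivalence n 3 N).eqvGen_iff.1 (Quot.eqvGen_exact (Quot.out_eq _))
    obtain ⟨t, ht⟩ := h
    exact ⟨(Quot.mk _ c, t), Subtype.ext (funext fun i => (ht i).symm)⟩

theorem num_ucycles_k3 (n : ℕ) (hn : 4 ≤ n) :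
    Nat.card (Quot (RotEquiv (n := n) (k := 3) (N := n * (n - 1) * (n - 2)))) =
      (n - 3) ^ ((n - 1) * (n - 2) / 2) * (n - 2) ^ (n - 1) * (n - 1) ^ ((n - 1) * (n - 2) / 2 - 2) * n ^ (n - 2) * (Nat.factorial (n - 3)) ^ (n * (n - 1)) := by
  obtain ⟨m, rfl⟩ := Nat.exists_eq_add_of_le' hn
  have hpos : 0 < (m + 4) * (m + 4 - 1) * (m + 4 - 2) := by
    rw [Nat.add_sub_assoc (by norm_num), Nat.add_sub_assoc (by norm_num)]
    positivity
  have : NeZero ((m + 4) * (m + 4 - 1) * (m + 4 - 2)) := ⟨hpos.ne'⟩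
  refine Nat.eq_of_mul_eq_mul_right hpos ?_
  rw [card_quot_rotEquiv rfl, card_isUniversalCycle rfl, card_isEulerCycle (card_triples _)]
  have hcard : ∀ w : Pairs (m + 4), Nat.card {l // IsEulerTour Triples.src Triples.tgt w l} =
      (m + 2) * ((m + 1) ^ ((m + 3) * (m + 2) / 2) * (m + 2) ^ (m + 3) *
        (m + 3) ^ ((m + 3) * (m + 2) / 2 - 2) * (m + 4) ^ (m + 2)) *
          (m + 1).factorial ^ ((m + 4) * (m + 3)) := by
    intro w
    rw [card_isEulerTour (d := m + 2) (by positivity) card_src_eq card_tgt_eq,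
      card_arcOrdering (d := m + 2) (by positivity) card_src_eq,
      TransitionMatrix.card_isArborescence_triples, card_pairs]
    rfl
  have hfin : ∀ w : Pairs (m + 4), Finite {l // IsEulerTour Triples.src Triples.tgt w l} :=
    fun w => Nat.finite_of_card_ne_zero (by rw [hcard]; positivity)
  rw [Nat.card_sigma, Finset.sum_congr rfl fun w _ => hcard w, Finset.sum_const, Finset.card_univ,
    card_pairs, smul_eq_mul]
  have e1 : m + 4 - 1 = m + 3 := rfl
  have e2 : m + 4 - 2 = m + 2 := rfl
  have e3 : m + 4 - 3 = m + 1 := rfl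
  rw [e1, e2, e3]
  generalize (m + 3) * (m + 2) / 2 - 2 = k
  generalize (m + 3) * (m + 2) / 2 = k'
  generalize (m + 1).factorial ^ ((m + 4) * (m + 3)) = F
  ring
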